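/- Partition {1,…,t} into consecutive blocks B_1,…,B_n with |B_j| = |c_j|, and for 1 ≤ i ≤ r−1 define the reduced promotion matrix PMr^i(T) ∈ ℤ_{≥0}^{n×n} by PMr^i(T)_{u,v} := #{(a,b) ∈ B_u × B_v : i ∈ PM(T)_{a,b}}. If T and T′ are r-row fluctuating tableaux of length n with the same type c (with t := Σ_j |c_j| ≥ 1) and PMr^i(T) = PMr^i(T′) for all 1 ≤ i ≤ r−1, then T = T′. -/

import Mathlib

open scoped Classical

noncomputable section

namespace FT

/-- A (raw) `r`-row integer vector; generalized partitions are the antitone ones. -/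
abbrev GP (r : ℕ) := Fin r → ℤ

/-- The weakly decreasing rearrangement of a tuple. -/
def sortDesc {r : ℕ} (α : GP r) : GP r := fun i => (α ∘ Tuple.sort α) i.rev

/-- Standard basis vector (0-indexed). -/
def eV {r : ℕ} (a : Fin r) : GP r := fun i => if i = a then 1 else 0

/-- Standard basis vector with 1-indexed row `a` (zero if out of range). -/
def eN (r : ℕ) (a : ℕ) : GP r := fun i => if (i : ℕ) + 1 = a then 1 else 0

/-- Indicator vector of a set of rows. -/
def indV {r : ℕ} (S : Finset (Fin r)) : GP r := fun i => if i ∈ S then 1 else 0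

/-- `colStep r c μ λ`: `λ` is obtained from `μ` by adding (if `c ≥ 0`) or removing
(if `c ≤ 0`) a skew column of `|c|` boxes. -/
def colStep (r : ℕ) (c : ℤ) (μ lam : GP r) : Prop :=
  ∃ S : Finset (Fin r), S.card = c.natAbs ∧
    (if 0 ≤ c then lam = μ + indV S else lam = μ - indV S)

/-- Skew fluctuating tableau of length `n` and type `c` (recorded at indices `0,…,n`;
values of `T` and `c` beyond those indices are irrelevant). -/
def IsSkewFT (r n : ℕ) (T : ℕ → GP r) (c : ℕ → ℤ) : Prop :=
  (∀ k ≤ n, Antitone (T k)) ∧ ∀ j < n, colStep r (c j) (T j) (T (j + 1))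

/-- (Non-skew) fluctuating tableau: starts at the empty shape. -/
def IsFT (r n : ℕ) (T : ℕ → GP r) (c : ℕ → ℤ) : Prop :=
  IsSkewFT r n T c ∧ T 0 = 0

/-- Rectangular: the final shape is constant. -/
def Rect (r n : ℕ) (T : ℕ → GP r) : Prop := ∃ m : ℤ, ∀ i, T n i = m

/-- Bender–Knuth involution `BK_i` (for `1 ≤ i ≤ n-1`). -/
def BK {r : ℕ} (i : ℕ) (T : ℕ → GP r) : ℕ → GP r :=
  fun k => if k = i then sortDesc (T (i + 1) + T (i - 1) - T i) else T k

/-- `BKseg a m = BK (a+m-1) ∘ ⋯ ∘ BK a` (apply `BK a` first). -/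
def BKseg {r : ℕ} (a : ℕ) : ℕ → (ℕ → GP r) → ℕ → GP r
  | 0 => id
  | m + 1 => BK (a + m) ∘ BKseg a m

/-- Promotion `P = BK_{n-1} ∘ ⋯ ∘ BK_1` on length-`n` tableaux. -/
def promo {r : ℕ} (n : ℕ) (T : ℕ → GP r) : ℕ → GP r := BKseg 1 (n - 1) T

/-- `BKsegRev a m = BK a ∘ ⋯ ∘ BK (a+m-1)` (apply `BK (a+m-1)` first). -/
def BKsegRev {r : ℕ} (a : ℕ) : ℕ → (ℕ → GP r) → ℕ → GP r
  | 0 => id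
  | m + 1 => BKsegRev a m ∘ BK (a + m)

/-- Inverse of promotion: `P⁻¹ = BK_1 ∘ ⋯ ∘ BK_{n-1}`. -/
def promoInv {r : ℕ} (n : ℕ) (T : ℕ → GP r) : ℕ → GP r := BKsegRev 1 (n - 1) T

def evacAux {r : ℕ} : ℕ → (ℕ → GP r) → ℕ → GP r
  | 0, T => T
  | m + 1, T => evacAux m (BKseg 1 (m + 1) T)

/-- Evacuation `E = BK_1 ∘ (BK_2∘BK_1) ∘ ⋯ ∘ (BK_{n-1}∘⋯∘BK_1)`. -/
def evac {r : ℕ} (n : ℕ) (T : ℕ → GP r) : ℕ → GP r := evacAux (n - 1) T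

def devacAux {r : ℕ} (n : ℕ) : ℕ → (ℕ → GP r) → ℕ → GP r
  | 0, T => T
  | m + 1, T => BKseg (n - (m + 1)) (m + 1) (devacAux n m T)

/-- Dual evacuation `E* = (BK_{n-1}∘⋯∘BK_1) ∘ (BK_{n-1}∘⋯∘BK_2) ∘ ⋯ ∘ BK_{n-1}`. -/
def devac {r : ℕ} (n : ℕ) (T : ℕ → GP r) : ℕ → GP r := devacAux n (n - 1) T

/-- `rev(-v)`. -/
def revNeg {r : ℕ} (v : GP r) : GP r := fun i => - v i.rev

/-- Time reversal `τ`. -/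
def tauT {r : ℕ} (n : ℕ) (T : ℕ → GP r) : ℕ → GP r := fun k => T (n - k)

/-- `ϖ`. -/
def varpiT {r : ℕ} (T : ℕ → GP r) : ℕ → GP r := fun k => revNeg (T k)

/-- `ε`. -/
def epsT {r : ℕ} (n : ℕ) (T : ℕ → GP r) : ℕ → GP r := fun k => revNeg (T (n - k))

/-- Sign of the `j`-th step of `T` (paper indexing: step `j` goes from `λ^{j-1}` to `λ^j`). -/
def sgnStep {r : ℕ} (T : ℕ → GP r) (j : ℕ) : ℤ :=
  if T j = T (j - 1) then 0 else if T (j - 1) ≤ T j then 1 else -1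

/-- The switch involution `toggle_j` (paper indexing, `1 ≤ j ≤ n`). -/
def toggleT {r : ℕ} (j : ℕ) (T : ℕ → GP r) : ℕ → GP r :=
  fun m => if m < j then T m else fun i => T m i - sgnStep T j

/-- Number of boxes added/removed in the step from `T j` to `T (j+1)`. -/
def stepSize {r : ℕ} (T : ℕ → GP r) (j : ℕ) : ℕ :=
  (Finset.univ.filter fun i : Fin r => T (j + 1) i ≠ T j i).card

/-- Cumulative step sizes: position of `T j` inside the oscillization. -/
def cum {r : ℕ} (T : ℕ → GP r) (j : ℕ) : ℕ := ∑ j' ∈ Finset.range j, stepSize T j'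

/-- The `j`-th intermediate shape of the oscillization of the skew-column step `μ → λ`:
boxes are added smallest-row-first and removed largest-row-first. -/
def oscStep {r : ℕ} (μ lam : GP r) (j : ℕ) : GP r := fun i =>
  let S := Finset.univ.filter fun i' : Fin r => lam i' ≠ μ i'
  if i ∈ S ∧ (if μ i < lam i then (S.filter fun i' => i' ≤ i).card ≤ j
              else (S.filter fun i' => i ≤ i').card ≤ j)
  then lam i else μ i

/-- Largest index `j ≤ n` with `cum T j ≤ k`. -/
def stdIdx {r : ℕ} (n : ℕ) (T : ℕ → GP r) (k : ℕ) : ℕ :=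
  ((Finset.range (n + 1)).filter fun j => cum T j ≤ k).sup id

/-- The oscillization `std(T)` of a length-`n` tableau, a tableau of length `t = Σ|c_j|`. -/
def stdT {r : ℕ} (n : ℕ) (T : ℕ → GP r) : ℕ → GP r := fun k =>
  if stdIdx n T k = n then T n
  else oscStep (T (stdIdx n T k)) (T (stdIdx n T k + 1)) (k - cum T (stdIdx n T k))

/-- Rows of the promotion–evacuation growth diagram: `PE t S u` is `P^u(S)`
for a length-`t` (oscillating) tableau `S`. -/
def PE {r : ℕ} (t : ℕ) (S : ℕ → GP r) (u : ℕ) : ℕ → GP r := (promo t)^[u] S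

/-- `i ∈ {1,…,r-1}` is recorded at cell `(u,v)` of the growth diagram of `S`
(rows 1-indexed; `λ^{u,v} = P^u(S)(v-u)`). -/
def recorded (r t : ℕ) (S : ℕ → GP r) (i u v : ℕ) : Prop :=
  ∃ a b : Fin r,
    (PE t S (u - 1) (v - u) = PE t S u (v - u - 1) + eV a ∧
     PE t S (u - 1) (v - u + 1) = PE t S u (v - u) + eV b ∧
     (a : ℕ) < i ∧ i ≤ (b : ℕ))
    ∨
    (PE t S u (v - u - 1) = PE t S (u - 1) (v - u) + eV a ∧
     PE t S u (v - u) = PE t S (u - 1) (v - u + 1) + eV b ∧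
     (b : ℕ) < i ∧ i ≤ (a : ℕ))

/-- `i ∈ PM(T)_{u,v}` for an off-diagonal entry of the promotion matrix of `T`
(`u, v ∈ {1,…,t}`, `1 ≤ i ≤ r-1`), using the oscillization `std(T)`. -/
def PMmem (r n t : ℕ) (T : ℕ → GP r) (i u v : ℕ) : Prop :=
  1 ≤ u ∧ u ≤ t ∧ 1 ≤ v ∧ v ≤ t ∧ u ≠ v ∧ 1 ≤ i ∧ i ≤ r - 1 ∧
    recorded r t (stdT n T) i u (if u < v then v else v + t)

/-- Graph of the partial promotion function `prom_i(T)`: `prom_i(T)(u) = v`.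
By convention `prom_0 = prom_r = id` on `{1,…,t}`. -/
def promRel (r n t : ℕ) (T : ℕ → GP r) (i u v : ℕ) : Prop :=
  if i = 0 ∨ i = r then 1 ≤ u ∧ u ≤ t ∧ u = v else PMmem r n t T i u v

/-- Sum of the first `i` entries (1-indexed prefix sums). -/
def pSum {r : ℕ} (v : GP r) (i : ℕ) : ℤ :=
  ∑ j ∈ Finset.univ.filter (fun j : Fin r => (j : ℕ) < i), v j

/-- The filled oscillized local-rule grid: row index `k` counts down from the top row
(`k = 0` is `std(λ → ν)`), column index `q` goes right; the left column is
`std(κ → λ)` read so that `grid cA κ λ ν k 0 = std(κ→λ)` at position `cA - k`. -/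
def grid {r : ℕ} (cA : ℕ) (κ lam ν : GP r) : ℕ → ℕ → GP r
  | 0, q => oscStep lam ν q
  | k + 1, 0 => oscStep κ lam (cA - (k + 1))
  | k + 1, q + 1 =>
      sortDesc (grid cA κ lam ν k (q + 1) + grid cA κ lam ν (k + 1) q -
        grid cA κ lam ν k q)
  termination_by k q => (k, q)

/-- 1-indexed entry of a vector (0 if out of range). -/
def ent {r : ℕ} (v : GP r) (h : ℕ) : ℤ := if hh : h - 1 < r then v ⟨h - 1, hh⟩ else 0

/-- The chain `j_0 = 1, j_h = ` least `h`-balance point of the lattice word of `T`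
weakly after `j_{h-1}` (in `{1,…,n}`), `none` once undefined. An index `j` is an
`h`-balance point iff `(T j)_h = (T j)_{h+1}` (1-indexed rows). -/
def jChain (r n : ℕ) (T : ℕ → GP r) : ℕ → Option ℕ
  | 0 => some 1
  | h + 1 =>
    match jChain r n T h with
    | none => none
    | some jp =>
      if H : ∃ j, jp ≤ j ∧ j ≤ n ∧ ent (T j) (h + 1) = ent (T j) (h + 2) then
        some (Nat.find H)
      else none

/-- `k`: the largest `h ≤ r-1` such that `j_1, …, j_h` are all defined. -/
def kVal (r n : ℕ) (T : ℕ → GP r) : ℕ :=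
  ((Finset.range r).filter fun h => (jChain r n T h).isSome).sup id

/-- `j_h`, defaulting to `0` when undefined. -/
def jval (r n : ℕ) (T : ℕ → GP r) (h : ℕ) : ℕ := (jChain r n T h).getD 0

/-- `ω_c` for `c ∈ {0,±1,…,±r}`: top-justified column of `c` ones if `c ≥ 0`,
bottom-justified column of `|c|` minus-ones if `c < 0`. -/
def omegaGP (r : ℕ) (c : ℤ) : GP r := fun i =>
  if 0 ≤ c then (if (i : ℕ) < c.natAbs then 1 else 0)
  else (if r - c.natAbs ≤ (i : ℕ) then -1 else 0)

/-- The extremal fluctuating tableau of type `c`: partial sums of the `ω_{c_j}`. -/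
def extremal (r : ℕ) (c : ℕ → ℤ) (k : ℕ) : GP r := ∑ j ∈ Finset.range k, omegaGP r (c j)

/-- Lexicographic order: the first nonzero entry of `β - α` is positive. -/
def ltLex {r : ℕ} (α β : GP r) : Prop := ∃ i : Fin r, (∀ j, j < i → α j = β j) ∧ α i < β i

/-- Cumulative sums of `|c_j|` (block boundaries). -/
def cumC (c : ℕ → ℤ) (j : ℕ) : ℕ := ∑ j' ∈ Finset.range j, (c j').natAbs

/-- Entry `(u,v)` (for `u,v ∈ {1,…,n}`) of the reduced promotion matrix `PMr^i(T)`: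
the number of cells in the block `B_u × B_v` whose promotion-matrix entry contains `i`. -/
def PMr (r n t : ℕ) (T : ℕ → GP r) (c : ℕ → ℤ) (i u v : ℕ) : ℕ :=
  (((Finset.Icc (cumC c (u - 1) + 1) (cumC c u)) ×ˢ
    (Finset.Icc (cumC c (v - 1) + 1) (cumC c v))).filter
      fun p => PMmem r n t T i p.1 p.2).card

/-- The set of `r`-row fluctuating tableaux of length `n`, shape `lam`, type `c`,
in bundled (finitely-indexed) form. -/
def FTset (r n : ℕ) (lam : GP r) (c : Fin n → ℤ) : Set (Fin (n + 1) → GP r) :=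
  {T | (∀ k, Antitone (T k)) ∧ T 0 = 0 ∧ T (Fin.last n) = lam ∧
       ∀ j : Fin n, colStep r (c j) (T j.castSucc) (T j.succ)}

/-! Write `λ^{u,v}` for the shapes of the growth diagram of `std(T)` and let `F_i(u, v)` be the sum
of the first `i` coordinates of `λ^{u,v}`. The local rule says that the mixed difference of `F_i`
over a unit cell is `1` if `i` is recorded there and `0` otherwise, so `PMr^i(T)_{U,V}` is the mixed
difference of `F_i` over the rectangle `B_U × B_V`. On the diagonal `F_i` vanishes, and on the first
block superdiagonal the shape is a single column of known size, because promotion keeps the boxes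
of a skew column in monotone rows. Hence the upper triangle of `PMr^i(T)` determines `F_i` at all
block corners, in particular along the top row, where `λ^{0,v}` runs through the shapes of `T`. -/

/-! ### Sorting and duality -/

section Sorting

variable {r : ℕ}

theorem sortDesc_eq_of_comp_perm_eq {α β : GP r} (σ : Equiv.Perm (Fin r)) (hβ : Antitone β)
    (h : α ∘ σ = β) : sortDesc α = β := by
  have hmono : Monotone (α ∘ Fin.revPerm.trans σ) := by
    rw [Equiv.coe_trans, ← Function.comp_assoc, h]
    exact hβ.comp Fin.rev_anti
  funext i
  have hsort := congrFun (Tuple.comp_sort_eq_comp_iff_monotone.mpr hmono) i.rev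
  rw [← h]
  simpa [sortDesc] using hsort.symm

theorem antitone_sortDesc (α : GP r) : Antitone (sortDesc α) :=
  (Tuple.monotone_sort α).comp_antitone Fin.rev_anti

theorem revNeg_add (v w : GP r) : revNeg (v + w) = revNeg v + revNeg w := by
  funext i
  simp only [revNeg, Pi.add_apply, neg_add]

theorem revNeg_sub (v w : GP r) : revNeg (v - w) = revNeg v - revNeg w := by
  funext i
  simp only [revNeg, Pi.sub_apply, neg_sub_neg, neg_sub]

theorem revNeg_revNeg (v : GP r) : revNeg (revNeg v) = v := by
  funext i
  simp only [revNeg, Fin.rev_rev, neg_neg]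

theorem revNeg_zero : revNeg (0 : GP r) = 0 := by
  funext i
  simp only [revNeg, Pi.zero_apply, neg_zero]

theorem revNeg_eV (a : Fin r) : revNeg (eV a) = -eV a.rev := by
  funext i
  simp only [revNeg, eV, Pi.neg_apply, Fin.rev_eq_iff]

theorem antitone_revNeg {v : GP r} (hv : Antitone v) : Antitone (revNeg v) :=
  fun _ _ hij => neg_le_neg (hv (Fin.rev_anti hij))

theorem sortDesc_revNeg (α : GP r) : sortDesc (revNeg α) = revNeg (sortDesc α) := by
  refine sortDesc_eq_of_comp_perm_eq ((Tuple.sort α).trans Fin.revPerm)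
    (antitone_revNeg (antitone_sortDesc α)) ?_
  funext i
  simp [revNeg, sortDesc]

theorem eV_injective : Function.Injective (eV : Fin r → GP r) := by
  intro a b hab
  by_contra hne
  simpa [eV, hne] using congrFun hab a

theorem add_eV_add_eV_ne (κ : GP r) (a b : Fin r) : κ + eV a + eV b ≠ κ := by
  intro h
  have hκ : eV a a + eV b a = 0 := by
    simpa [add_assoc] using congrFun h a
  simp only [eV, if_true] at hκ
  split_ifs at hκ <;> omega

/-- The topmost row whose entry agrees with that of row `c`. Adding a box to row `c` and
sorting adds the box to this row instead. -/
def topRow (κ : GP r) (c : Fin r) : Fin r :=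
  (Finset.univ.filter fun i => κ i = κ c).min' ⟨c, by simp⟩

theorem topRow_le_of_apply_eq {κ : GP r} {c i : Fin r} (h : κ i = κ c) : topRow κ c ≤ i :=
  Finset.min'_le _ _ (by simpa using h)

theorem topRow_le (κ : GP r) (c : Fin r) : topRow κ c ≤ c := topRow_le_of_apply_eq rfl

theorem apply_topRow (κ : GP r) (c : Fin r) : κ (topRow κ c) = κ c :=
  (Finset.mem_filter.mp (Finset.min'_mem (Finset.univ.filter fun i => κ i = κ c) _)).2

theorem apply_lt_of_lt_topRow {κ : GP r} (hκ : Antitone κ) {c i : Fin r} (hi : i < topRow κ c) :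
    κ c < κ i :=
  (hκ (hi.le.trans (topRow_le κ c))).lt_of_ne' fun h => hi.not_ge (topRow_le_of_apply_eq h)

theorem antitone_add_eV {κ : GP r} (hκ : Antitone κ) {c : Fin r} (h : ∀ i < c, κ c < κ i) :
    Antitone (κ + eV c) := by
  intro i j hij
  have hle := hκ hij
  by_cases hj : j = c
  · subst hj
    rcases hij.eq_or_lt with rfl | hlt
    · rfl
    · simpa [eV, hlt.ne] using h i hlt
  · simp only [Pi.add_apply, eV, hj, if_false]
    split_ifs <;> omega

theorem topRow_eq_self_of_antitone_add_eV {κ : GP r} {c : Fin r} (h : Antitone (κ + eV c)) :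
    topRow κ c = c := by
  by_contra hne
  have hle := h (topRow_le κ c)
  simp [eV, hne, apply_topRow] at hle

theorem antitone_add_eV_topRow {κ : GP r} (hκ : Antitone κ) (c : Fin r) :
    Antitone (κ + eV (topRow κ c)) :=
  antitone_add_eV hκ fun _ hi => (apply_topRow κ c).trans_lt (apply_lt_of_lt_topRow hκ hi)

theorem sortDesc_add_eV {κ : GP r} (hκ : Antitone κ) (c : Fin r) :
    sortDesc (κ + eV c) = κ + eV (topRow κ c) := by
  refine sortDesc_eq_of_comp_perm_eq (Equiv.swap (topRow κ c) c) (antitone_add_eV_topRow hκ c) ?_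
  have htop := apply_topRow κ c
  generalize topRow κ c = i at htop ⊢
  funext x
  simp only [Function.comp_apply, Pi.add_apply, eV, Equiv.swap_apply_def]
  split_ifs <;> simp_all

theorem topRow_lt_topRow_add_eV {κ : GP r} (hκ : Antitone κ) {c d : Fin r} (hcd : c < d) :
    topRow κ c < topRow (κ + eV (topRow κ c)) d := by
  have hd : topRow κ c < d := (topRow_le κ c).trans_lt hcd
  by_contra! hle
  have h := (antitone_add_eV_topRow hκ c) hle
  have hκd := hκ hd.le
  rw [apply_topRow (κ + eV (topRow κ c)) d] at h
  simp only [Pi.add_apply, eV, if_true, hd.ne', if_false] at h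
  omega

end Sorting

/-! ### The local rule -/

section LocalRule

variable {r : ℕ}

/-- The shapes `x` and `y` differ by a single box. -/
def BoxStep (x y : GP r) : Prop := ∃ a, y = x + eV a ∨ y = x - eV a

/-- The shape of a unit cell of a growth diagram, with corners named as in the definition of the
promotion matrix: the vertical sides `κ — lam` and `μ — ν` are boxes of the same sign, and the
added box moves down, respectively the removed box moves up, from left to right. -/
def GrowthCell (κ lam μ ν : GP r) : Prop :=
  ∃ a b : Fin r, (lam = κ + eV a ∧ ν = μ + eV b ∧ a ≤ b) ∨
    (κ = lam + eV a ∧ μ = ν + eV b ∧ b ≤ a)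

/-- `i` is recorded at the unit cell with corners `κ, lam, μ, ν`. -/
def CellRecords (i : ℕ) (κ lam μ ν : GP r) : Prop :=
  ∃ a b : Fin r,
    (lam = κ + eV a ∧ ν = μ + eV b ∧ (a : ℕ) < i ∧ i ≤ (b : ℕ)) ∨
    (κ = lam + eV a ∧ μ = ν + eV b ∧ (b : ℕ) < i ∧ i ≤ (a : ℕ))

theorem cellRecords_add_eV (i : ℕ) (κ μ : GP r) (a b : Fin r) :
    CellRecords i κ (κ + eV a) μ (μ + eV b) ↔ (a : ℕ) < i ∧ i ≤ (b : ℕ) := by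
  constructor
  · rintro ⟨a', b', ⟨ha, hb, h⟩ | ⟨ha, -⟩⟩
    · rwa [eV_injective (add_left_cancel ha), eV_injective (add_left_cancel hb)]
    · exact absurd ha.symm (add_eV_add_eV_ne κ a a')
  · exact fun h => ⟨a, b, Or.inl ⟨rfl, rfl, h⟩⟩

theorem cellRecords_add_eV_left (i : ℕ) (lam ν : GP r) (a b : Fin r) :
    CellRecords i (lam + eV a) lam (ν + eV b) ν ↔ (b : ℕ) < i ∧ i ≤ (a : ℕ) := by
  constructor
  · rintro ⟨a', b', ⟨ha, -⟩ | ⟨ha, hb, h⟩⟩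
    · exact absurd ha.symm (add_eV_add_eV_ne lam a a')
    · rwa [eV_injective (add_left_cancel ha), eV_injective (add_left_cancel hb)]
  · exact fun h => ⟨a, b, Or.inr ⟨rfl, rfl, h⟩⟩

theorem pSum_add (v w : GP r) (i : ℕ) : pSum (v + w) i = pSum v i + pSum w i := by
  simp only [pSum, Pi.add_apply, Finset.sum_add_distrib]

theorem pSum_eV (a : Fin r) (i : ℕ) : pSum (eV a) i = if (a : ℕ) < i then 1 else 0 := by
  simp [pSum, eV]

theorem GrowthCell.pSum_mixed_difference {κ lam μ ν : GP r} (h : GrowthCell κ lam μ ν) (i : ℕ) :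
    pSum μ i - pSum κ i - pSum ν i + pSum lam i = if CellRecords i κ lam μ ν then 1 else 0 := by
  obtain ⟨a, b, ⟨rfl, rfl, hab⟩ | ⟨rfl, rfl, hab⟩⟩ := h <;> rw [Fin.le_def] at hab
  · simp only [cellRecords_add_eV, pSum_add, pSum_eV]
    split_ifs <;> omega
  · simp only [cellRecords_add_eV_left, pSum_add, pSum_eV]
    split_ifs <;> omega

theorem GrowthCell.boxStep {κ lam μ ν : GP r} (h : GrowthCell κ lam μ ν) : BoxStep μ ν := by
  obtain ⟨a, b, ⟨-, hν, -⟩ | ⟨-, hμ, -⟩⟩ := h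
  · exact ⟨b, Or.inl hν⟩
  · exact ⟨b, Or.inr (eq_sub_of_add_eq hμ.symm)⟩

theorem eq_add_eV_of_revNeg_eq_sub {x y : GP r} {a : Fin r} (h : revNeg y = revNeg x - eV a) :
    y = x + eV a.rev := by
  rw [← revNeg_revNeg y, h, revNeg_sub, revNeg_revNeg, revNeg_eV, sub_neg_eq_add]

theorem eq_sub_eV_of_revNeg_eq_add {x y : GP r} {a : Fin r} (h : revNeg y = revNeg x + eV a) :
    y = x - eV a.rev := by
  rw [← revNeg_revNeg y, h, revNeg_add, revNeg_revNeg, revNeg_eV, ← sub_eq_add_neg]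

theorem BoxStep.of_revNeg {x y : GP r} (h : BoxStep (revNeg x) (revNeg y)) : BoxStep x y := by
  obtain ⟨a, h | h⟩ := h
  · exact ⟨a.rev, Or.inr (eq_sub_eV_of_revNeg_eq_add h)⟩
  · exact ⟨a.rev, Or.inl (eq_add_eV_of_revNeg_eq_sub h)⟩

theorem BoxStep.revNeg {x y : GP r} (h : BoxStep x y) : BoxStep (revNeg x) (revNeg y) :=
  .of_revNeg (by simpa only [revNeg_revNeg] using h)

theorem GrowthCell.of_revNeg {κ lam μ ν : GP r}
    (h : GrowthCell (FT.revNeg κ) (FT.revNeg lam) (FT.revNeg μ) (FT.revNeg ν)) :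
    GrowthCell κ lam μ ν := by
  obtain ⟨a, b, ⟨hlam, hν, hab⟩ | ⟨hκ, hμ, hab⟩⟩ := h
  · exact ⟨a.rev, b.rev, Or.inr ⟨eq_add_of_sub_eq (eq_sub_eV_of_revNeg_eq_add hlam).symm,
      eq_add_of_sub_eq (eq_sub_eV_of_revNeg_eq_add hν).symm, Fin.rev_anti hab⟩⟩
  · exact ⟨a.rev, b.rev, Or.inl ⟨eq_add_eV_of_revNeg_eq_sub (eq_sub_of_add_eq hκ.symm),
      eq_add_eV_of_revNeg_eq_sub (eq_sub_of_add_eq hμ.symm), Fin.rev_anti hab⟩⟩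

theorem growthCell_add_eV {κ lam : GP r} {c : Fin r} (hlam : Antitone lam)
    (hν : Antitone (lam + eV c)) (h : BoxStep κ lam) :
    GrowthCell κ lam (κ + eV (topRow κ c)) (lam + eV c) := by
  have hκc := apply_topRow κ c
  have hlamc : topRow κ c ≠ c → lam c < lam (topRow κ c) := fun hne => by
    refine apply_lt_of_lt_topRow hlam ?_
    rw [topRow_eq_self_of_antitone_add_eV hν]
    exact (topRow_le κ c).lt_of_ne hne
  by_cases hne : topRow κ c = c
  · rw [hne]
    obtain ⟨a, rfl | rfl⟩ := h
    · exact ⟨a, a, Or.inl ⟨rfl, add_right_comm _ _ _, le_rfl⟩⟩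
    · exact ⟨a, a, Or.inr ⟨by abel, by abel, le_rfl⟩⟩
  have hlt := hlamc hne
  obtain ⟨a, rfl | rfl⟩ := h
  · have ha : topRow κ c = a := by
      by_contra ha
      simp only [Pi.add_apply, hκc, eV, ha, if_false] at hlt
      split_ifs at hlt <;> omega
    subst ha
    exact ⟨topRow κ c, c, Or.inl ⟨rfl, rfl, topRow_le κ c⟩⟩
  · have ha : c = a := by
      by_contra ha
      simp only [Pi.sub_apply, hκc, eV, ha, if_false] at hlt
      split_ifs at hlt <;> omega
    subst ha
    exact ⟨c, topRow κ c, Or.inr ⟨by abel, by abel, topRow_le κ c⟩⟩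

theorem boxStep_and_growthCell_sortDesc {κ lam ν : GP r} (hκ : Antitone κ) (hlam : Antitone lam)
    (hν : Antitone ν) (hκlam : BoxStep κ lam) (hlamν : BoxStep lam ν) :
    BoxStep κ (sortDesc (κ + ν - lam)) ∧ GrowthCell κ lam (sortDesc (κ + ν - lam)) ν := by
  -- An added box is treated directly, and a removed one is an added box of the dual shapes.
  have of_add : ∀ {κ lam : GP r} (c : Fin r), Antitone κ → Antitone lam →
      Antitone (lam + eV c) → BoxStep κ lam →
      BoxStep κ (sortDesc (κ + (lam + eV c) - lam)) ∧
        GrowthCell κ lam (sortDesc (κ + (lam + eV c) - lam)) (lam + eV c) := by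
    intro κ lam c hκ hlam hν hκlam
    rw [show κ + (lam + eV c) - lam = κ + eV c by abel, sortDesc_add_eV hκ]
    exact ⟨⟨_, Or.inl rfl⟩, growthCell_add_eV hlam hν hκlam⟩
  obtain ⟨c, rfl | rfl⟩ := hlamν
  · exact of_add c hκ hlam hν hκlam
  · have hdual : revNeg (lam - eV c) = revNeg lam + eV c.rev := by
      rw [revNeg_sub, revNeg_eV, sub_neg_eq_add]
    have h := of_add c.rev (antitone_revNeg hκ) (antitone_revNeg hlam)
      (hdual ▸ antitone_revNeg hν) hκlam.revNeg
    rw [← hdual, ← revNeg_add, ← revNeg_sub, sortDesc_revNeg] at h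
    exact ⟨.of_revNeg h.1, .of_revNeg h.2⟩

end LocalRule

/-! ### Promotion -/

section Promotion

variable {r : ℕ}

theorem BKseg_one_apply_of_lt {m k : ℕ} (S : ℕ → GP r) (h : m < k) : BKseg 1 m S k = S k := by
  induction m with
  | zero => rfl
  | succ m ih =>
    have hk : k ≠ 1 + m := by omega
    simp only [BKseg, Function.comp_apply, BK, hk, if_false]
    exact ih (by omega)

theorem BKseg_one_apply_of_le {m k : ℕ} (S : ℕ → GP r) (h : k ≤ m) :
    BKseg 1 m S k = BKseg 1 k S k := by
  induction m, h using Nat.le_induction with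
  | base => rfl
  | succ m hm ih =>
    have hk : k ≠ 1 + m := by omega
    simp only [BKseg, Function.comp_apply, BK, hk, if_false]
    exact ih

theorem promo_zero (t : ℕ) (S : ℕ → GP r) : promo t S 0 = S 0 :=
  BKseg_one_apply_of_le S (Nat.zero_le _)

theorem promo_succ {t k : ℕ} (S : ℕ → GP r) (hk : k + 2 ≤ t) :
    promo t S (k + 1) = sortDesc (promo t S k + S (k + 2) - S (k + 1)) := by
  simp only [promo]
  rw [BKseg_one_apply_of_le S (by omega : k + 1 ≤ t - 1),
    BKseg_one_apply_of_le S (by omega : k ≤ t - 1)]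
  simp only [BKseg, Function.comp_apply, BK, Nat.add_comm 1 k, if_true, Nat.add_sub_cancel]
  rw [BKseg_one_apply_of_lt S (k.lt_add_one.trans (k + 1).lt_add_one),
    BKseg_one_apply_of_lt S k.lt_add_one, add_comm (S (k + 1 + 1))]

theorem PE_succ (t : ℕ) (S : ℕ → GP r) (u : ℕ) : PE t S (u + 1) = promo t (PE t S u) :=
  Function.iterate_succ_apply' (promo t) u S

/-- The first `m` steps of `S` form an oscillating tableau. -/
structure IsOscillating (m : ℕ) (S : ℕ → GP r) : Prop where
  zero : S 0 = 0
  antitone : ∀ k ≤ m, Antitone (S k)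
  boxStep : ∀ k < m, BoxStep (S k) (S (k + 1))

namespace IsOscillating

variable {m t : ℕ} {S : ℕ → GP r}

theorem mono {m' : ℕ} (hS : IsOscillating m' S) (hm : m ≤ m') : IsOscillating m S :=
  ⟨hS.zero, fun k hk => hS.antitone k (hk.trans hm), fun k hk => hS.boxStep k (hk.trans_le hm)⟩

theorem antitone_promo_and_boxStep (hS : IsOscillating (m + 1) S) (hm : m + 1 ≤ t) {k : ℕ}
    (hk : k ≤ m) : Antitone (promo t S k) ∧ BoxStep (promo t S k) (S (k + 1)) := by
  induction k with
  | zero =>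
    rw [promo_zero]
    exact ⟨hS.antitone 0 (by omega), hS.boxStep 0 (by omega)⟩
  | succ k ih =>
    obtain ⟨hanti, hbox⟩ := ih (by omega)
    rw [promo_succ S (by omega)]
    exact ⟨antitone_sortDesc _, (boxStep_and_growthCell_sortDesc hanti (hS.antitone _ (by omega))
      (hS.antitone _ (by omega)) hbox (hS.boxStep _ (by omega))).2.boxStep⟩

theorem boxStep_and_growthCell_promo (hS : IsOscillating (m + 1) S) (hm : m + 1 ≤ t) {k : ℕ}
    (hk : k < m) : BoxStep (promo t S k) (promo t S (k + 1)) ∧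
      GrowthCell (promo t S k) (S (k + 1)) (promo t S (k + 1)) (S (k + 2)) := by
  obtain ⟨hanti, hbox⟩ := hS.antitone_promo_and_boxStep hm hk.le
  rw [promo_succ S (by omega)]
  exact boxStep_and_growthCell_sortDesc hanti (hS.antitone _ (by omega))
    (hS.antitone _ (by omega)) hbox (hS.boxStep _ (by omega))

theorem promo (hS : IsOscillating (m + 1) S) (hm : m + 1 ≤ t) :
    IsOscillating m (promo t S) where
  zero := (promo_zero t S).trans hS.zero
  antitone _ hk := (hS.antitone_promo_and_boxStep hm hk).1
  boxStep _ hk := (hS.boxStep_and_growthCell_promo hm hk).1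

theorem PE {u : ℕ} (hS : IsOscillating (u + m) S) (hm : u + m ≤ t) :
    IsOscillating m (PE t S u) := by
  induction u generalizing m with
  | zero => simpa [FT.PE] using hS
  | succ u ih =>
    rw [PE_succ]
    exact (ih (m := m + 1) (by rwa [← add_assoc, add_right_comm]) (by omega)).promo (by omega)

end IsOscillating

/-- Steps `p + 1, …, p + m` of `S` add boxes in strictly increasing rows, as in the oscillization
of the addition of a skew column. -/
def AddsColumn (S : ℕ → GP r) (p m : ℕ) : Prop :=
  ∃ ρ : Fin m → Fin r, StrictMono ρ ∧ ∀ k : Fin m, S (p + k + 1) = S (p + k) + eV (ρ k)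

theorem AddsColumn.promo {S : ℕ → GP r} {p m t : ℕ} (hS : IsOscillating (p + m + 1) S)
    (ht : p + m + 1 ≤ t) (h : AddsColumn S (p + 1) m) : AddsColumn (promo t S) p m := by
  obtain ⟨ρ, hρ, hadd⟩ := h
  have hanti : ∀ k : Fin m, Antitone (FT.promo t S (p + k)) := fun k =>
    (hS.antitone_promo_and_boxStep ht (by omega)).1
  have hstep : ∀ k : Fin m, FT.promo t S (p + k + 1) =
      FT.promo t S (p + k) + eV (topRow (FT.promo t S (p + k)) (ρ k)) := fun k => by
    rw [promo_succ S (by omega), ← sortDesc_add_eV (hanti k), add_sub_assoc]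
    congr 2
    rw [sub_eq_iff_eq_add', show p + k + 2 = p + 1 + k + 1 by omega, hadd k,
      show p + k + 1 = p + 1 + k by omega]
  refine ⟨fun k => topRow (FT.promo t S (p + k)) (ρ k), ?_, hstep⟩
  cases m with
  | zero => exact fun k => k.elim0
  | succ m =>
    refine Fin.strictMono_iff_lt_succ.mpr fun k => ?_
    have hlt := topRow_lt_topRow_add_eV (hanti k.castSucc) (hρ k.castSucc_lt_succ)
    rwa [← hstep] at hlt

theorem AddsColumn.PE {S : ℕ → GP r} {u p m t : ℕ} (hS : IsOscillating (u + (p + m)) S)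
    (ht : u + (p + m) ≤ t) (h : AddsColumn S (u + p) m) : AddsColumn (PE t S u) p m := by
  induction u generalizing p with
  | zero => simpa [FT.PE] using h
  | succ u ih =>
    have hassoc : ∀ q, u + 1 + q = u + (q + 1) := by omega
    rw [hassoc] at hS ht h
    rw [PE_succ]
    refine AddsColumn.promo (hS.PE ht) (by omega) (ih ?_ (by omega) h)
    rwa [add_right_comm]

theorem indV_eq_sum_eV (A : Finset (Fin r)) : indV A = ∑ a ∈ A, eV a := by
  funext i
  simp [indV, eV]

theorem AddsColumn.colStep {S : ℕ → GP r} {p m : ℕ} (h : AddsColumn S p m) :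
    colStep r m (S p) (S (p + m)) := by
  obtain ⟨ρ, hρ, hadd⟩ := h
  refine ⟨Finset.univ.map ⟨ρ, hρ.injective⟩, by simp, ?_⟩
  rw [if_pos (Int.natCast_nonneg m), ← sub_eq_iff_eq_add']
  calc S (p + m) - S p
      = ∑ k : Fin m, (S (p + k + 1) - S (p + k)) := by
        rw [Fin.sum_univ_eq_sum_range fun k => S (p + k + 1) - S (p + k)]
        exact (Finset.sum_range_sub (fun k => S (p + k)) m).symm
    _ = ∑ k : Fin m, eV (ρ k) := by simp only [hadd, add_sub_cancel_left]
    _ = indV (Finset.univ.map ⟨ρ, hρ.injective⟩) := by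
        rw [indV_eq_sum_eV, Finset.sum_map]
        rfl

end Promotion

/-! ### Skew columns and dual tableaux -/

section SkewColumns

variable {r : ℕ} {c : ℤ} {μ lam : GP r}

theorem revNeg_indV (A : Finset (Fin r)) :
    revNeg (indV A) = -indV (A.map Fin.revPerm.toEmbedding) := by
  funext i
  simp [revNeg, indV, Finset.mem_map_equiv]

theorem colStep_iff_of_nonneg (hc : 0 ≤ c) :
    colStep r c μ lam ↔ ∃ A : Finset (Fin r), A.card = c.natAbs ∧ lam = μ + indV A := by
  simp only [colStep, if_pos hc]

theorem colStep_iff_of_nonpos (hc : c ≤ 0) :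
    colStep r c μ lam ↔ ∃ A : Finset (Fin r), A.card = c.natAbs ∧ lam = μ - indV A := by
  rcases hc.lt_or_eq with hc | rfl
  · simp only [colStep, if_neg hc.not_ge]
  · simp [colStep, indV_eq_sum_eV]

theorem colStep.revNeg (h : colStep r c μ lam) :
    colStep r (-c) (FT.revNeg μ) (FT.revNeg lam) := by
  rcases le_total 0 c with hc | hc
  · obtain ⟨A, hA, rfl⟩ := (colStep_iff_of_nonneg hc).mp h
    refine (colStep_iff_of_nonpos (neg_nonpos.mpr hc)).mpr
      ⟨A.map Fin.revPerm.toEmbedding, by simpa using hA, ?_⟩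
    rw [revNeg_add, revNeg_indV, sub_eq_add_neg]
  · obtain ⟨A, hA, rfl⟩ := (colStep_iff_of_nonpos hc).mp h
    refine (colStep_iff_of_nonneg (neg_nonneg.mpr hc)).mpr
      ⟨A.map Fin.revPerm.toEmbedding, by simpa using hA, ?_⟩
    rw [revNeg_sub, revNeg_indV, sub_neg_eq_add]

theorem sum_indV (A : Finset (Fin r)) : ∑ i, indV A i = A.card := by
  simp [indV]

theorem colStep.sum_eq (h : colStep r c μ lam) : ∑ i, lam i = ∑ i, μ i + c := by
  rcases le_total 0 c with hc | hc
  · obtain ⟨A, hA, rfl⟩ := (colStep_iff_of_nonneg hc).mp h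
    simp only [Pi.add_apply, Finset.sum_add_distrib, sum_indV]
    omega
  · obtain ⟨A, hA, rfl⟩ := (colStep_iff_of_nonpos hc).mp h
    simp only [Pi.sub_apply, Finset.sum_sub_distrib, sum_indV]
    omega

theorem isLowerSet_of_antitone_indV {A : Finset (Fin r)} (hA : Antitone (indV A)) :
    IsLowerSet (A : Set (Fin r)) := by
  intro a b hba ha
  by_contra hb
  have hle := hA hba
  rw [Finset.mem_coe] at ha hb
  simp [indV, ha, hb] at hle

theorem eq_of_antitone_indV {A B : Finset (Fin r)} (hA : Antitone (indV A))
    (hB : Antitone (indV B)) (hcard : A.card = B.card) : A = B := by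
  rcases (isLowerSet_of_antitone_indV hA).total (isLowerSet_of_antitone_indV hB) with h | h
  · exact Finset.eq_of_subset_of_card_le (Finset.coe_subset.mp h) hcard.ge
  · exact (Finset.eq_of_subset_of_card_le (Finset.coe_subset.mp h) hcard.le).symm

theorem eq_of_colStep_zero {v w : GP r} (hv : Antitone v) (hw : Antitone w)
    (hcv : colStep r c 0 v) (hcw : colStep r c 0 w) : v = w := by
  have of_nonneg : ∀ {c : ℤ} {v w : GP r}, 0 ≤ c → Antitone v → Antitone w →
      colStep r c 0 v → colStep r c 0 w → v = w := by
    intro c v w hc hv hw hcv hcw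
    obtain ⟨A, hA, rfl⟩ := (colStep_iff_of_nonneg hc).mp hcv
    obtain ⟨B, hB, rfl⟩ := (colStep_iff_of_nonneg hc).mp hcw
    rw [zero_add] at hv hw ⊢
    rw [eq_of_antitone_indV hv hw (hA.trans hB.symm), zero_add]
  rcases le_total 0 c with hc | hc
  · exact of_nonneg hc hv hw hcv hcw
  · have h := of_nonneg (neg_nonneg.mpr hc) (antitone_revNeg hv) (antitone_revNeg hw)
      (revNeg_zero (r := r) ▸ hcv.revNeg) (revNeg_zero (r := r) ▸ hcw.revNeg)
    rw [← revNeg_revNeg v, h, revNeg_revNeg]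

theorem BK_commute_varpiT (i : ℕ) : Function.Commute (BK (r := r) i) varpiT := by
  intro T
  funext k
  simp only [BK, varpiT]
  split_ifs
  · rw [← revNeg_add, ← revNeg_sub, sortDesc_revNeg]
  · rfl

theorem BKseg_commute_varpiT (a m : ℕ) : Function.Commute (BKseg (r := r) a m) varpiT := by
  induction m with
  | zero => exact .id_left
  | succ m ih => exact (BK_commute_varpiT (a + m)).comp_left ih

theorem PE_varpiT (t : ℕ) (S : ℕ → GP r) (u : ℕ) : PE t (varpiT S) u = varpiT (PE t S u) :=
  Function.Commute.iterate_left (BKseg_commute_varpiT 1 (t - 1)) u S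

theorem IsFT.varpiT {n : ℕ} {T : ℕ → GP r} {c : ℕ → ℤ} (hT : IsFT r n T c) :
    IsFT r n (varpiT T) (-c) :=
  ⟨⟨fun k hk => antitone_revNeg (hT.1.1 k hk), fun j hj => (hT.1.2 j hj).revNeg⟩, by
    simp only [FT.varpiT, hT.2, revNeg_zero]⟩

theorem cumC_neg (c : ℕ → ℤ) : cumC (-c) = cumC c := by
  funext j
  simp only [cumC, Pi.neg_apply, Int.natAbs_neg]

end SkewColumns

/-! ### Oscillization -/

section Oscillization

variable {r : ℕ} {μ lam : GP r} {A : Finset (Fin r)}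

theorem oscStep_zero (μ lam : GP r) : oscStep μ lam 0 = μ := by
  funext i
  refine if_neg ?_
  rintro ⟨hi, h⟩
  split_ifs at h <;>
    exact Finset.eq_empty_iff_forall_notMem.mp (Finset.card_eq_zero.mp (Nat.le_zero.mp h)) i
      (Finset.mem_filter.mpr ⟨hi, le_rfl⟩)

theorem oscStep_of_card_le {j : ℕ}
    (h : (Finset.univ.filter fun i => lam i ≠ μ i).card ≤ j) : oscStep μ lam j = lam := by
  funext i
  simp only [oscStep, Finset.mem_filter, Finset.mem_univ, true_and]
  by_cases hi : lam i = μ i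
  · simp [hi]
  · rw [if_pos]
    exact ⟨hi, by split_ifs <;> exact (Finset.card_filter_le _ _).trans h⟩

theorem oscStep_revNeg (μ lam : GP r) (j : ℕ) :
    oscStep (revNeg μ) (revNeg lam) j = revNeg (oscStep μ lam j) := by
  have hdiff : (Finset.univ.filter fun i => revNeg lam i ≠ revNeg μ i) =
      (Finset.univ.filter fun i => lam i ≠ μ i).map Fin.revPerm.toEmbedding := by
    ext i
    simp [revNeg, Finset.mem_map_equiv]
  funext i
  simp only [oscStep, hdiff]
  simp only [revNeg, oscStep, Finset.filter_map, Finset.card_map, Function.comp_def,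
    Equiv.coe_toEmbedding, Fin.revPerm_apply, Fin.rev_le_iff, Fin.le_rev_iff,
    Finset.mem_map_equiv, Fin.revPerm_symm, neg_lt_neg_iff, Finset.mem_filter,
    Finset.mem_univ, true_and]
  rcases lt_trichotomy (lam i.rev) (μ i.rev) with hlt | heq | hgt
  · simp only [hlt, hlt.not_gt, if_true, if_false, neg_ite]
  · simp only [heq, ite_self]
  · simp only [hgt, hgt.not_gt, if_true, if_false, neg_ite]

theorem filter_add_indV_ne (μ : GP r) (A : Finset (Fin r)) :
    (Finset.univ.filter fun i => (μ + indV A) i ≠ μ i) = A := by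
  ext i
  simp [indV]

theorem oscStep_add_indV_apply (μ : GP r) (A : Finset (Fin r)) (j : ℕ) (i : Fin r) :
    oscStep μ (μ + indV A) j i =
      if i ∈ A ∧ (A.filter fun i' => i' ≤ i).card ≤ j then μ i + 1 else μ i := by
  simp only [oscStep, filter_add_indV_ne]
  by_cases hi : i ∈ A <;> simp [hi, indV]

theorem antitone_oscStep_add_indV (hμ : Antitone μ) (hlam : Antitone (μ + indV A)) (j : ℕ) :
    Antitone (oscStep μ (μ + indV A) j) := by
  intro x y hxy
  have hrank : (A.filter fun i => i ≤ x).card ≤ (A.filter fun i => i ≤ y).card :=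
    Finset.card_le_card (Finset.monotone_filter_right A fun _ _ hi => hi.trans hxy)
  have hμxy := hμ hxy
  have hlamxy := hlam hxy
  simp only [Pi.add_apply, indV] at hlamxy
  rw [oscStep_add_indV_apply, oscStep_add_indV_apply]
  by_cases hx : x ∈ A <;> by_cases hy : y ∈ A <;>
    simp only [hx, hy, if_true, if_false, true_and, false_and] at hlamxy ⊢ <;>
    (try split_ifs) <;> omega

theorem card_filter_le_orderEmbOfFin (A : Finset (Fin r)) (k : Fin A.card) :
    (A.filter fun i => i ≤ A.orderEmbOfFin rfl k).card = k + 1 := by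
  have himage : (A.filter fun i => i ≤ A.orderEmbOfFin rfl k) =
      (Finset.Iic k).map (A.orderEmbOfFin rfl).toEmbedding := by
    ext i
    simp only [Finset.mem_filter, Finset.mem_map, Finset.mem_Iic]
    constructor
    · rintro ⟨hi, hle⟩
      obtain ⟨l, rfl⟩ : i ∈ Set.range (A.orderEmbOfFin rfl) := by simpa using hi
      exact ⟨l, (A.orderEmbOfFin rfl).le_iff_le.mp hle, rfl⟩
    · rintro ⟨l, hl, rfl⟩
      exact ⟨A.orderEmbOfFin_mem rfl l, (A.orderEmbOfFin rfl).monotone hl⟩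
  rw [himage, Finset.card_map, Fin.card_Iic]

theorem addsColumn_oscStep_add_indV (μ : GP r) (A : Finset (Fin r)) :
    AddsColumn (oscStep μ (μ + indV A)) 0 A.card := by
  refine ⟨A.orderEmbOfFin rfl, (A.orderEmbOfFin rfl).strictMono, fun k => ?_⟩
  funext i
  simp only [Pi.add_apply, oscStep_add_indV_apply, eV, zero_add]
  by_cases hi : i ∈ A
  · obtain ⟨l, rfl⟩ : i ∈ Set.range (A.orderEmbOfFin rfl) := by simpa using hi
    simp only [hi, true_and, card_filter_le_orderEmbOfFin,
      (A.orderEmbOfFin rfl).injective.eq_iff, Fin.ext_iff]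
    split_ifs <;> omega
  · have hne : i ≠ A.orderEmbOfFin rfl k := fun h => hi (h ▸ A.orderEmbOfFin_mem rfl k)
    simp [hi, hne]

theorem colStep.antitone_oscStep {c : ℤ} (h : colStep r c μ lam) (hμ : Antitone μ)
    (hlam : Antitone lam) (j : ℕ) : Antitone (oscStep μ lam j) := by
  rcases le_total 0 c with hc | hc
  · obtain ⟨A, -, rfl⟩ := (colStep_iff_of_nonneg hc).mp h
    exact antitone_oscStep_add_indV hμ hlam j
  · obtain ⟨A, -, hA⟩ := (colStep_iff_of_nonneg (neg_nonneg.mpr hc)).mp h.revNeg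
    have hdual := antitone_oscStep_add_indV (antitone_revNeg hμ) (hA ▸ antitone_revNeg hlam) j
    rw [← hA, oscStep_revNeg] at hdual
    exact revNeg_revNeg (oscStep μ lam j) ▸ antitone_revNeg hdual

theorem boxStep_oscStep_add_indV (μ : GP r) {A : Finset (Fin r)} {j : ℕ} (hj : j < A.card) :
    BoxStep (oscStep μ (μ + indV A) j) (oscStep μ (μ + indV A) (j + 1)) := by
  obtain ⟨ρ, -, hadd⟩ := addsColumn_oscStep_add_indV μ A
  exact ⟨ρ ⟨j, hj⟩, Or.inl (by simpa only [zero_add] using hadd ⟨j, hj⟩)⟩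

theorem colStep.boxStep_oscStep {c : ℤ} (h : colStep r c μ lam) {j : ℕ} (hj : j < c.natAbs) :
    BoxStep (oscStep μ lam j) (oscStep μ lam (j + 1)) := by
  rcases le_total 0 c with hc | hc
  · obtain ⟨A, hA, rfl⟩ := (colStep_iff_of_nonneg hc).mp h
    exact boxStep_oscStep_add_indV μ (hA ▸ hj)
  · obtain ⟨A, hcard, hA⟩ := (colStep_iff_of_nonneg (neg_nonneg.mpr hc)).mp h.revNeg
    have hdual := boxStep_oscStep_add_indV (FT.revNeg μ) (A := A) (j := j) (by omega)
    rw [← hA, oscStep_revNeg, oscStep_revNeg] at hdual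
    exact .of_revNeg hdual

variable {n : ℕ} {T : ℕ → GP r}

theorem cum_succ (T : ℕ → GP r) (j : ℕ) : cum T (j + 1) = cum T j + stepSize T j :=
  Finset.sum_range_succ _ _

theorem cum_mono (T : ℕ → GP r) : Monotone (cum T) :=
  monotone_nat_of_le_succ fun j => cum_succ T j ▸ Nat.le_add_right _ _

theorem stdIdx_eq {j k : ℕ} (hj : j ≤ n) (hjk : cum T j ≤ k)
    (hlast : ∀ l ≤ n, cum T l ≤ k → l ≤ j) : stdIdx n T k = j := by
  refine le_antisymm (Finset.sup_le fun l hl => ?_) (Finset.le_sup (f := id) ?_)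
  · rw [Finset.mem_filter, Finset.mem_range_succ_iff] at hl
    exact hlast l hl.1 hl.2
  · rw [Finset.mem_filter, Finset.mem_range_succ_iff]
    exact ⟨hj, hjk⟩

theorem stdT_cum_add_of_lt {j k : ℕ} (hj : j < n) (hk : k < stepSize T j) :
    stdT n T (cum T j + k) = oscStep (T j) (T (j + 1)) k := by
  have hidx : stdIdx n T (cum T j + k) = j := by
    refine stdIdx_eq hj.le (Nat.le_add_right _ _) fun l _ hl => ?_
    by_contra! hjl
    have hcum := cum_mono T hjl
    rw [Nat.succ_eq_add_one, cum_succ] at hcum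
    omega
  rw [stdT, hidx, if_neg hj.ne, Nat.add_sub_cancel_left]

theorem stdT_cum {j : ℕ} (hj : j ≤ n) : stdT n T (cum T j) = T j := by
  induction hj using Nat.decreasingInduction with
  | self => rw [stdT, stdIdx_eq le_rfl le_rfl fun _ hl _ => hl, if_pos rfl]
  | of_succ j hj ih =>
    rcases (stepSize T j).eq_zero_or_pos with hzero | hpos
    · have hT : T (j + 1) = T j := by
        rw [← oscStep_of_card_le (j := 0) (Nat.le_zero.mpr hzero), oscStep_zero]
      rwa [cum_succ, hzero, add_zero, hT] at ih
    · exact (stdT_cum_add_of_lt hj hpos).trans (oscStep_zero _ _)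

theorem stdT_cum_add {j k : ℕ} (hj : j < n) (hk : k ≤ stepSize T j) :
    stdT n T (cum T j + k) = oscStep (T j) (T (j + 1)) k := by
  rcases hk.lt_or_eq with hlt | rfl
  · exact stdT_cum_add_of_lt hj hlt
  · rw [← cum_succ, stdT_cum hj]
    exact (oscStep_of_card_le le_rfl).symm

theorem stepSize_varpiT (T : ℕ → GP r) : stepSize (varpiT T) = stepSize T := by
  funext j
  refine Finset.card_equiv Fin.revPerm fun i => ?_
  simp [varpiT, revNeg]

theorem stdT_varpiT (n : ℕ) (T : ℕ → GP r) : stdT n (varpiT T) = varpiT (stdT n T) := by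
  have hcum : cum (varpiT T) = cum T := by
    funext j
    simp only [cum, stepSize_varpiT]
  have hidx : stdIdx n (varpiT T) = stdIdx n T := by
    funext k
    simp only [stdIdx, hcum]
  funext k
  simp only [stdT, hidx, hcum, varpiT, oscStep_revNeg]
  split_ifs <;> rfl

theorem exists_eq_cum_add {k : ℕ} (hk : k < cum T n) :
    ∃ j < n, ∃ l < stepSize T j, k = cum T j + l := by
  induction n with
  | zero => exact absurd hk (Nat.not_lt_zero k)
  | succ n ih =>
    rcases lt_or_ge k (cum T n) with hlt | hge
    · obtain ⟨j, hj, h⟩ := ih hlt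
      exact ⟨j, hj.trans n.lt_add_one, h⟩
    · rw [cum_succ] at hk
      exact ⟨n, n.lt_add_one, k - cum T n, by omega, by omega⟩

variable {c : ℕ → ℤ}

theorem colStep.card_ne {c : ℤ} (h : colStep r c μ lam) :
    (Finset.univ.filter fun i => lam i ≠ μ i).card = c.natAbs := by
  obtain ⟨A, hA, h⟩ := h
  split_ifs at h <;> subst h <;> rw [← hA] <;> congr 1 <;> ext i <;> simp [indV]

theorem IsFT.stepSize_eq (hT : IsFT r n T c) {j : ℕ} (hj : j < n) :
    stepSize T j = (c j).natAbs :=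
  (hT.1.2 j hj).card_ne

theorem IsFT.cum_eq (hT : IsFT r n T c) {j : ℕ} (hj : j ≤ n) : cum T j = cumC c j :=
  Finset.sum_congr rfl fun _ hi => hT.stepSize_eq ((Finset.mem_range.mp hi).trans_le hj)

theorem IsFT.stdT_cumC (hT : IsFT r n T c) {j : ℕ} (hj : j ≤ n) : stdT n T (cumC c j) = T j := by
  rw [← hT.cum_eq hj, stdT_cum hj]

theorem IsFT.isOscillating_stdT (hT : IsFT r n T c) : IsOscillating (cumC c n) (stdT n T) := by
  rw [← hT.cum_eq le_rfl]
  refine ⟨(stdT_cum n.zero_le).trans hT.2, fun k hk => ?_, fun k hk => ?_⟩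
  · rcases hk.lt_or_eq with hlt | rfl
    · obtain ⟨j, hj, l, hl, rfl⟩ := exists_eq_cum_add hlt
      rw [stdT_cum_add hj hl.le]
      exact (hT.1.2 j hj).antitone_oscStep (hT.1.1 j hj.le) (hT.1.1 (j + 1) hj) l
    · rw [stdT_cum le_rfl]
      exact hT.1.1 n le_rfl
  · obtain ⟨j, hj, l, hl, rfl⟩ := exists_eq_cum_add hk
    rw [add_assoc, stdT_cum_add hj hl.le, stdT_cum_add hj hl]
    exact (hT.1.2 j hj).boxStep_oscStep (hT.stepSize_eq hj ▸ hl)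

theorem IsFT.addsColumn_stdT (hT : IsFT r n T c) {j : ℕ} (hj : j < n) (hc : 0 ≤ c j) :
    AddsColumn (stdT n T) (cumC c j) (c j).natAbs := by
  obtain ⟨A, hcard, hA⟩ := (colStep_iff_of_nonneg hc).mp (hT.1.2 j hj)
  have hblock : ∀ k ≤ A.card, stdT n T (cumC c j + k) = oscStep (T j) (T (j + 1)) k :=
    fun k hk => by
      rw [← hT.cum_eq hj.le, stdT_cum_add hj (by rwa [hT.stepSize_eq hj, ← hcard])]
  obtain ⟨ρ, hρ, hadd⟩ := addsColumn_oscStep_add_indV (T j) A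
  rw [← hcard]
  refine ⟨ρ, hρ, fun k => ?_⟩
  rw [add_assoc, hblock _ k.is_lt, hblock _ k.is_lt.le, hA]
  simpa only [zero_add] using hadd k

end Oscillization

/-! ### The growth diagram -/

section MixedDifference

variable {M : Type*} [AddCommGroup M]

/-- The mixed difference of `F` over the rectangle with corners `(u, v)` and `(u', v')`. -/
def mixedDiff (F : ℕ → ℕ → M) (u u' v v' : ℕ) : M := F u' v' - F u' v - F u v' + F u v

theorem sum_mixedDiff (F : ℕ → ℕ → M) {u u' v v' : ℕ} (hu : u ≤ u') (hv : v ≤ v') :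
    ∑ a ∈ Finset.Ico u u', ∑ b ∈ Finset.Ico v v', mixedDiff F a (a + 1) b (b + 1) =
      mixedDiff F u u' v v' := by
  calc ∑ a ∈ Finset.Ico u u', ∑ b ∈ Finset.Ico v v', mixedDiff F a (a + 1) b (b + 1)
      = ∑ a ∈ Finset.Ico u u', ((F (a + 1) v' - F (a + 1) v) - (F a v' - F a v)) := by
        refine Finset.sum_congr rfl fun a _ => ?_
        have hrow := Finset.sum_Ico_sub (fun b => F (a + 1) b - F a b) hv
        rw [sub_sub_sub_comm, ← hrow]
        refine Finset.sum_congr rfl fun b _ => ?_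
        rw [mixedDiff]
        abel
    _ = mixedDiff F u u' v v' := by
        rw [Finset.sum_Ico_sub (fun a => F a v' - F a v) hu, mixedDiff]
        abel

theorem eq_of_mixedDiff_eq {F G : ℕ → ℕ → M} {n : ℕ} (hdiag : ∀ u ≤ n, F u u = G u u)
    (hsuper : ∀ u < n, F u (u + 1) = G u (u + 1))
    (hmixed : ∀ u v, u < v → v < n →
      mixedDiff F u (u + 1) v (v + 1) = mixedDiff G u (u + 1) v (v + 1))
    {u v : ℕ} (huv : u ≤ v) (hv : v ≤ n) : F u v = G u v := by
  obtain ⟨d, rfl⟩ := Nat.exists_eq_add_of_le huv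
  induction d using Nat.twoStepInduction generalizing u with
  | zero => exact hdiag u (by omega)
  | one => exact hsuper u (by omega)
  | more d ih ih' =>
    have hcell := hmixed u (u + d + 1) (by omega) (by omega)
    have hbelow := ih' (u := u + 1) (by omega) (by omega)
    have hleft := ih' (u := u) (by omega) (by omega)
    have hdiagonal := ih (u := u + 1) (by omega) (by omega)
    rw [show u + 1 + (d + 1) = u + d + 1 + 1 by omega] at hbelow
    rw [← add_assoc] at hleft
    rw [add_right_comm] at hdiagonal
    change F u (u + d + 1 + 1) = G u (u + d + 1 + 1)
    simpa only [mixedDiff, hbelow, hleft, hdiagonal, add_left_inj, sub_right_inj] using hcell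

end MixedDifference

section GrowthDiagram

variable {r : ℕ}

/-- The shape `λ^{u,v}` in the growth diagram of the length-`t` tableau `S`, for `u ≤ v ≤ u + t`. -/
def growthShape (t : ℕ) (S : ℕ → GP r) (u v : ℕ) : GP r := PE t S u (v - u)

theorem IsOscillating.growthShape_self {t u : ℕ} {S : ℕ → GP r} (hS : IsOscillating t S)
    (hu : u ≤ t) : growthShape t S u u = 0 := by
  rw [growthShape, Nat.sub_self]
  exact (hS.mono (m := u + 0) hu).PE hu |>.zero

theorem IsOscillating.growthCell_growthShape {t u v : ℕ} {S : ℕ → GP r} (hS : IsOscillating t S)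
    (huv : u < v) (hv : v < t) :
    GrowthCell (growthShape t S (u + 1) v) (growthShape t S u v)
      (growthShape t S (u + 1) (v + 1)) (growthShape t S u (v + 1)) := by
  obtain ⟨k, rfl⟩ := Nat.exists_eq_add_of_lt huv
  have hle : u + (k + 1 + 1) ≤ t := by omega
  have hPE := (hS.mono hle).PE hle
  have hcell := (hPE.boxStep_and_growthCell_promo (t := t) (by omega) k.lt_add_one).2
  simp only [growthShape, PE_succ]
  convert hcell using 2 <;> omega

theorem recorded_iff_cellRecords {t u v : ℕ} (S : ℕ → GP r) (i : ℕ) (huv : u < v) :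
    recorded r t S i (u + 1) (v + 1) ↔
      CellRecords i (growthShape t S (u + 1) v) (growthShape t S u v)
        (growthShape t S (u + 1) (v + 1)) (growthShape t S u (v + 1)) := by
  have hsub : v + 1 - u = v - u + 1 := by omega
  simp only [recorded, CellRecords, growthShape, Nat.add_sub_add_right, Nat.add_sub_cancel,
    Nat.sub_sub, hsub]

theorem cumC_succ (c : ℕ → ℤ) (j : ℕ) : cumC c (j + 1) = cumC c j + (c j).natAbs :=
  Finset.sum_range_succ _ _

theorem cumC_mono (c : ℕ → ℤ) : Monotone (cumC c) :=
  monotone_nat_of_le_succ fun j => cumC_succ c j ▸ Nat.le_add_right _ _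

variable {n : ℕ} {T : ℕ → GP r} {c : ℕ → ℤ}

theorem PMr_eq_sum (t i U V : ℕ) :
    (PMr r n t T c i (U + 1) (V + 1) : ℤ) =
      ∑ a ∈ Finset.Ico (cumC c U) (cumC c (U + 1)), ∑ b ∈ Finset.Ico (cumC c V) (cumC c (V + 1)),
        if PMmem r n t T i (a + 1) (b + 1) then 1 else 0 := by
  simp only [PMr, Nat.add_sub_cancel]
  rw [Finset.natCast_card_filter, Finset.sum_product, ← Finset.Ico_add_one_right_eq_Icc,
    ← Finset.Ico_add_one_right_eq_Icc, ← Finset.sum_Ico_add']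
  exact Finset.sum_congr rfl fun a _ => (Finset.sum_Ico_add' _ _ _ _).symm

theorem IsFT.PMr_eq_mixedDiff (hT : IsFT r n T c) {i U V : ℕ} (hi : 1 ≤ i) (hir : i ≤ r - 1)
    (hUV : U < V) (hV : V < n) :
    (PMr r n (cumC c n) T c i (U + 1) (V + 1) : ℤ) =
      mixedDiff (fun u v => pSum (growthShape (cumC c n) (stdT n T) u v) i)
        (cumC c U) (cumC c (U + 1)) (cumC c V) (cumC c (V + 1)) := by
  rw [PMr_eq_sum, ← sum_mixedDiff _ (cumC_mono c U.le_succ) (cumC_mono c V.le_succ)]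
  refine Finset.sum_congr rfl fun a ha => Finset.sum_congr rfl fun b hb => ?_
  rw [Finset.mem_Ico] at ha hb
  have hab : a < b := (ha.2.trans_le (cumC_mono c hUV)).trans_le hb.1
  have hbn : b < cumC c n := hb.2.trans_le (cumC_mono c hV)
  have hmem : PMmem r n (cumC c n) T i (a + 1) (b + 1) ↔
      recorded r (cumC c n) (stdT n T) i (a + 1) (b + 1) := by
    simp only [PMmem, add_lt_add_iff_right, hab, if_true]
    constructor
    · exact fun h => h.2.2.2.2.2.2.2
    · exact fun h => ⟨by omega, by omega, by omega, by omega, by omega, hi, hir, h⟩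
  rw [mixedDiff, (hT.isOscillating_stdT.growthCell_growthShape hab hbn).pSum_mixed_difference]
  simp only [hmem, recorded_iff_cellRecords _ _ hab]

theorem IsFT.colStep_growthShape (hT : IsFT r n T c) {j : ℕ} (hj : j < n) :
    colStep r (c j) 0 (growthShape (cumC c n) (stdT n T) (cumC c j) (cumC c (j + 1))) := by
  have of_nonneg : ∀ {T : ℕ → GP r} {c : ℕ → ℤ}, IsFT r n T c → 0 ≤ c j →
      colStep r (c j) 0 (PE (cumC c n) (stdT n T) (cumC c j) (c j).natAbs) := by
    intro T c hT hc
    have hle : cumC c j + (0 + (c j).natAbs) ≤ cumC c n := by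
      rw [zero_add, ← cumC_succ]
      exact cumC_mono c hj
    have hosc := hT.isOscillating_stdT.mono hle
    have hstep := (AddsColumn.PE hosc hle (hT.addsColumn_stdT hj hc)).colStep
    rwa [(hosc.PE hle).zero, zero_add, Int.natAbs_of_nonneg hc] at hstep
  rw [growthShape, cumC_succ, Nat.add_sub_cancel_left]
  rcases le_total 0 (c j) with hc | hc
  · exact of_nonneg hT hc
  · have hdual := (of_nonneg hT.varpiT (neg_nonneg.mpr hc)).revNeg
    simp only [cumC_neg, stdT_varpiT, PE_varpiT, FT.varpiT, Pi.neg_apply, neg_neg, Int.natAbs_neg,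
      revNeg_zero, revNeg_revNeg] at hdual
    exact hdual

theorem IsFT.antitone_growthShape (hT : IsFT r n T c) {j : ℕ} (hj : j < n) :
    Antitone (growthShape (cumC c n) (stdT n T) (cumC c j) (cumC c (j + 1))) := by
  have hle : cumC c j + (c j).natAbs ≤ cumC c n := cumC_succ c j ▸ cumC_mono c hj
  rw [growthShape, cumC_succ, Nat.add_sub_cancel_left]
  exact ((hT.isOscillating_stdT.mono hle).PE hle).antitone _ le_rfl

theorem IsFT.growthShape_zero_cumC (hT : IsFT r n T c) {k : ℕ} (hk : k ≤ n) :
    growthShape (cumC c n) (stdT n T) (cumC c 0) (cumC c k) = T k :=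
  hT.stdT_cumC hk

theorem IsFT.sum_eq (hT : IsFT r n T c) {k : ℕ} (hk : k ≤ n) :
    ∑ i, T k i = ∑ j ∈ Finset.range k, c j := by
  induction k with
  | zero => simp [hT.2]
  | succ k ih => rw [(hT.1.2 k hk).sum_eq, ih (Nat.le_of_succ_le hk), Finset.sum_range_succ]

theorem pSum_self (v : GP r) : pSum v r = ∑ i, v i := by
  simp [pSum]

theorem pSum_succ (v : GP r) (i : Fin r) : pSum v (i + 1) = pSum v i + v i := by
  have hinsert : (Finset.univ.filter fun j : Fin r => (j : ℕ) < i + 1) =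
      insert i (Finset.univ.filter fun j : Fin r => (j : ℕ) < i) := by
    ext j
    simp only [Finset.mem_filter, Finset.mem_insert, Finset.mem_univ, true_and, Fin.ext_iff]
    omega
  rw [pSum, hinsert, Finset.sum_insert (by simp), add_comm, pSum]

theorem eq_of_pSum_eq {v w : GP r} (hsum : ∑ i, v i = ∑ i, w i)
    (h : ∀ i, 1 ≤ i → i ≤ r - 1 → pSum v i = pSum w i) : v = w := by
  have hp : ∀ i ≤ r, pSum v i = pSum w i := by
    intro i hi
    rcases i.eq_zero_or_pos with rfl | hpos
    · simp [pSum]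
    rcases hi.eq_or_lt with rfl | hlt
    · rw [pSum_self, pSum_self, hsum]
    · exact h i hpos (by omega)
  funext i
  have hi := hp (i + 1) i.is_lt
  rwa [pSum_succ, pSum_succ, hp i i.is_le', add_right_inj] at hi

end GrowthDiagram

theorem tableau_determined_by_reduced_promotion_matrices_general
    (r n t : ℕ) (T T' : ℕ → GP r) (c : ℕ → ℤ)
    (hT : IsFT r n T c) (hT' : IsFT r n T' c)
    (ht : t = ∑ j ∈ Finset.range n, (c j).natAbs) {k : ℕ} (hk : k ≤ n)
    (h : ∀ i, 1 ≤ i → i ≤ r - 1 → ∀ u v, 1 ≤ u → u < v → v ≤ k →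
      PMr r n t T c i u v = PMr r n t T' c i u v) :
    T k = T' k := by
  obtain rfl : t = cumC c n := ht
  refine eq_of_pSum_eq ((hT.sum_eq hk).trans (hT'.sum_eq hk).symm) fun i hi hir => ?_
  let F (S : ℕ → GP r) (u v : ℕ) : ℤ :=
    pSum (growthShape (cumC c n) (stdT n S) (cumC c u) (cumC c v)) i
  suffices hF : F T 0 k = F T' 0 k by
    simpa only [F, hT.growthShape_zero_cumC hk, hT'.growthShape_zero_cumC hk] using hF
  refine eq_of_mixedDiff_eq (n := k) (fun u hu => ?_) (fun u hu => ?_) (fun u v huv hv => ?_)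
    k.zero_le le_rfl
  · have hle := cumC_mono c (hu.trans hk)
    simp only [F, hT.isOscillating_stdT.growthShape_self hle,
      hT'.isOscillating_stdT.growthShape_self hle]
  · have hun := hu.trans_le hk
    simp only [F, eq_of_colStep_zero (hT.antitone_growthShape hun) (hT'.antitone_growthShape hun)
      (hT.colStep_growthShape hun) (hT'.colStep_growthShape hun)]
  · have hvn := hv.trans_le hk
    have hPMr := h i hi hir (u + 1) (v + 1) u.succ_pos (Nat.succ_lt_succ huv) hv
    exact (hT.PMr_eq_mixedDiff hi hir huv hvn).symm.trans
      ((congrArg Nat.cast hPMr).trans (hT'.PMr_eq_mixedDiff hi hir huv hvn))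

/-- **Theorem.** A fluctuating tableau is uniquely determined by its type together with
its reduced promotion matrices `PMr^1(T), …, PMr^{r-1}(T)`, where
`PMr^i(T)_{u,v} = #{(a,b) ∈ B_u × B_v : i ∈ PM(T)_{a,b}}` and `B_1,…,B_n` are the
consecutive blocks of `{1,…,t}` with `|B_j| = |c_j|`. -/
theorem tableau_determined_by_reduced_promotion_matrices
    (r n t : ℕ) (T T' : ℕ → GP r) (c : ℕ → ℤ)
    (hT : IsFT r n T c) (hT' : IsFT r n T' c)
    (ht : t = ∑ j ∈ Finset.range n, (c j).natAbs) (ht1 : 1 ≤ t)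
    (h : ∀ i, 1 ≤ i → i ≤ r - 1 → ∀ u v, 1 ≤ u → u ≤ n → 1 ≤ v → v ≤ n →
      PMr r n t T c i u v = PMr r n t T' c i u v) :
    ∀ k ≤ n, T k = T' k :=
  fun _ hk => tableau_determined_by_reduced_promotion_matrices_general r n t T T' c hT hT' ht hk
    fun i hi hir u v hu huv hv => h i hi hir u v hu (by omega) (by omega) (by omega)

end FT
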